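/- Fix z ∈ ℂ and generic tuples ū=(u_1,…,u_n), v̄=(v_1,…,v_m) in which u_n is regarded as a variable. As a function of u_n, K^{(z)}_{n,m}(ū | v̄) has at most a simple pole at u_n = v_m, and lim_{u_n → v_m} (u_n − v_m)·K^{(z)}_{n,m}(ū | v̄) = c·f(ū_n, v_m)·f(v_m, v̄_m)·K^{(z)}_{n−1,m−1}(ū_n | v̄_m); likewise lim_{u_n → v_m} (u_n − v_m)·\bar{K}^{(z)}_{n,m}(ū | v̄) = −c·f(v_m, ū_n)·f(v̄_m, v_m)·\bar{K}^{(z)}_{n−1,m−1}(ū_n | v̄_m). -/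

import Mathlib

open scoped BigOperators

noncomputable section

/-- The rational function `g(u,v) = c/(u-v)`. -/
def gC (c u v : ℂ) : ℂ := c / (u - v)

/-- The rational function `f(u,v) = (u-v+c)/(u-v)`. -/
def fC (c u v : ℂ) : ℂ := (u - v + c) / (u - v)

/-- The rational function `h(u,v) = (u-v+c)/c`. -/
def hC (c u v : ℂ) : ℂ := (u - v + c) / c

/-- A family of parameters is generic if all pairwise differences avoid `0, ±c, ±2c`. -/
def Generic (c : ℂ) {ι : Type*} (w : ι → ℂ) : Prop :=
  ∀ i j, i ≠ j → w i - w j ≠ 0 ∧ w i - w j ≠ c ∧ w i - w j ≠ -c ∧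
    w i - w j ≠ 2 * c ∧ w i - w j ≠ -2 * c

/-- The modified Izergin determinant `K^{(z)}(x̄|ȳ)`. -/
def KIz (c z : ℂ) {ι κ : Type*} [Fintype ι] [Fintype κ] [DecidableEq κ]
    (x : ι → ℂ) (y : κ → ℂ) : ℂ :=
  Matrix.det (Matrix.of fun j k : κ =>
    -z * (if j = k then 1 else 0) +
      (∏ i, fC c (x i) (y j)) * (∏ i ∈ Finset.univ.erase j, fC c (y j) (y i))
        / hC c (y j) (y k))

/-- The conjugated modified Izergin determinant: `c` is replaced by `-c`. -/
def KIzBar (c z : ℂ) {ι κ : Type*} [Fintype ι] [Fintype κ] [DecidableEq κ]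
    (x : ι → ℂ) (y : κ → ℂ) : ℂ :=
  KIz (-c) z x y

/-- Restriction of a tuple to a subtuple indexed by a `Finset`. -/
def restr {p : ℕ} (w : Fin p → ℂ) (s : Finset (Fin p)) : {x // x ∈ s} → ℂ :=
  fun i => w i.1

/-- Double product `f(w̄_s, w̄_t)` over two subtuples of a tuple. -/
def fSS (c : ℂ) {p : ℕ} (w : Fin p → ℂ) (s t : Finset (Fin p)) : ℂ :=
  ∏ i ∈ s, ∏ j ∈ t, fC c (w i) (w j)

open Topology Filter

/- Only the row of `v₀` has a pole, through its weight `f(t, v₀) = (t - v₀ + c) / (t - v₀)`.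
Multiplying that row by `t - v₀` removes the pole and, in the limit, also removes `z` from the row,
leaving a multiple of `1 / h(v₀, v_k)`. Eliminating with this row subtracts a rank one matrix from
the remaining block, and the result is the smaller Izergin matrix conjugated by the diagonal matrix
with entries `f(v₀, v_j)`. The conjugated determinant is the case `-c`, because replacing `c` by
`-c` exchanges the arguments of `f`. -/

lemma fC_neg (c x y : ℂ) : fC (-c) x y = fC c y x := by
  rw [fC, fC, ← neg_div_neg_eq]
  congr 1 <;> ring

lemma hC_self {c : ℂ} (hc : c ≠ 0) (x : ℂ) : hC c x x = 1 := by
  rw [hC, sub_self, zero_add, div_self hc]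

lemma sub_mul_fC (c : ℂ) {x y : ℂ} (hxy : x ≠ y) : (x - y) * fC c x y = x - y + c :=
  mul_div_cancel₀ _ (sub_ne_zero.mpr hxy)

lemma fC_ne_zero {c x y : ℂ} (hxy : x ≠ y) (h : hC c x y ≠ 0) : fC c x y ≠ 0 :=
  div_ne_zero (div_ne_zero_iff.mp h).1 (sub_ne_zero.mpr hxy)

lemma continuousAt_fC (c : ℂ) {x y : ℂ} (hxy : x ≠ y) : ContinuousAt (fun t => fC c t y) x := by
  unfold fC
  exact ContinuousAt.div (by fun_prop) (by fun_prop) (sub_ne_zero.mpr hxy)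

lemma fC_div_hC_sub {c w x y : ℂ} (hwx : w ≠ x) (hxw : hC c x w ≠ 0) (hwy : hC c w y ≠ 0)
    (hxy : hC c x y ≠ 0) :
    fC c x w / hC c x y - fC c x w / hC c x w / hC c w y = (fC c w y)⁻¹ / hC c x y := by
  have hx : x - w ≠ 0 := sub_ne_zero.mpr hwx.symm
  obtain ⟨hxw, hc⟩ := div_ne_zero_iff.mp hxw
  have hwy := (div_ne_zero_iff.mp hwy).1
  have hxy := (div_ne_zero_iff.mp hxy).1
  simp only [fC, hC]
  field_simp
  ring

lemma Generic.neg {c : ℂ} {ι : Type*} {w : ι → ℂ} (hw : Generic c w) : Generic (-c) w := by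
  intro i j hij
  obtain ⟨h0, hc, hc', h2c, h2c'⟩ := hw i j hij
  exact ⟨h0, hc', by rwa [neg_neg], by rwa [mul_neg, ← neg_mul], by rwa [neg_mul_neg]⟩

lemma Generic.comp {c : ℂ} {ι κ : Type*} {w : ι → ℂ} (hw : Generic c w) {e : κ → ι}
    (he : Function.Injective e) : Generic c (w ∘ e) :=
  fun i j hij => hw (e i) (e j) (he.ne hij)

lemma Generic.injective {c : ℂ} {ι : Type*} {w : ι → ℂ} (hw : Generic c w) :
    Function.Injective w := by
  intro i j h
  by_contra hij
  exact (hw i j hij).1 (sub_eq_zero.mpr h)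

lemma Generic.hC_ne_zero {c : ℂ} (hc : c ≠ 0) {ι : Type*} {w : ι → ℂ} (hw : Generic c w)
    (i j : ι) : hC c (w i) (w j) ≠ 0 := by
  obtain rfl | hij := eq_or_ne i j
  · rw [hC_self hc]
    exact one_ne_zero
  · exact div_ne_zero (fun h => (hw i j hij).2.2.1 (eq_neg_of_add_eq_zero_left h)) hc

/-- The matrix `(-ζ_j δ_{jk} + a_j / h(y_j, y_k))` underlying the modified Izergin determinants.
The parameter `ζ` and the weights `a` are allowed to depend on the row so that rescaling a row
stays within this family. -/
def izerginMatrix (c : ℂ) {κ : Type*} [DecidableEq κ] (ζ a y : κ → ℂ) : Matrix κ κ ℂ :=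
  Matrix.of fun j k => -ζ j * (if j = k then 1 else 0) + a j / hC c (y j) (y k)

/-- The row weights `f(x̄, y_j) f(y_j, ȳ_j)` of the modified Izergin determinant. -/
def izerginWeight (c : ℂ) {ι κ : Type*} [Fintype ι] [Fintype κ] [DecidableEq κ]
    (x : ι → ℂ) (y : κ → ℂ) (j : κ) : ℂ :=
  (∏ i, fC c (x i) (y j)) * ∏ i ∈ Finset.univ.erase j, fC c (y j) (y i)

lemma KIz_eq_det_izerginMatrix (c z : ℂ) {ι κ : Type*} [Fintype ι] [Fintype κ] [DecidableEq κ]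
    (x : ι → ℂ) (y : κ → ℂ) :
    KIz c z x y = (izerginMatrix c (fun _ => z) (izerginWeight c x y) y).det :=
  rfl

section IzerginMatrix

variable {κ : Type*} [Fintype κ] [DecidableEq κ]

lemma mul_det_izerginMatrix (c s : ℂ) (ζ a y : κ → ℂ) (i : κ) :
    s * (izerginMatrix c ζ a y).det =
      (izerginMatrix c (Function.update ζ i (s * ζ i)) (Function.update a i (s * a i)) y).det := by
  have hrow : izerginMatrix c (Function.update ζ i (s * ζ i)) (Function.update a i (s * a i)) y =
      (izerginMatrix c ζ a y).updateRow i (s • izerginMatrix c ζ a y i) := by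
    ext j k
    obtain rfl | hj := eq_or_ne j i
    · simp only [izerginMatrix, Matrix.of_apply, Function.update_self, Matrix.updateRow_self,
        Pi.smul_apply, smul_eq_mul]
      ring
    · simp only [izerginMatrix, Matrix.of_apply, Function.update_of_ne hj,
        Matrix.updateRow_ne hj]
  rw [hrow, Matrix.det_updateRow_smul, Matrix.updateRow_eq_self]

lemma continuous_det_izerginMatrix (c : ℂ) (y : κ → ℂ) :
    Continuous fun p : (κ → ℂ) × (κ → ℂ) => (izerginMatrix c p.1 p.2 y).det := by
  refine Continuous.matrix_det (continuous_matrix fun j k => ?_)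
  simp only [izerginMatrix, Matrix.of_apply, div_eq_mul_inv]
  fun_prop

lemma izerginMatrix_sub_vecMulVec {c w : ℂ} {y : κ → ℂ} (ζ a : κ → ℂ) (hw : ∀ j, w ≠ y j)
    (hyw : ∀ j, hC c (y j) w ≠ 0) (hwy : ∀ j, hC c w (y j) ≠ 0)
    (hy : ∀ j k, hC c (y j) (y k) ≠ 0) :
    izerginMatrix c ζ (fun j => fC c w (y j) * fC c (y j) w * a j) y -
        Matrix.vecMulVec (fun j => fC c w (y j) * fC c (y j) w * a j / hC c (y j) w)
          (fun k => (hC c w (y k))⁻¹) =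
      Matrix.diagonal (fun j => fC c w (y j)) * izerginMatrix c ζ a y *
        Matrix.diagonal (fun k => (fC c w (y k))⁻¹) := by
  ext j k
  have hkey := fC_div_hC_sub (hw j) (hyw j) (hwy k) (hy j k)
  have hdiag : fC c w (y j) * (-ζ j * (if j = k then 1 else 0)) * (fC c w (y k))⁻¹ =
      -ζ j * (if j = k then 1 else 0) := by
    split_ifs with hjk
    · subst hjk
      rw [mul_right_comm, mul_inv_cancel₀ (fC_ne_zero (hw j) (hwy j)), one_mul]
    · simp only [mul_zero, zero_mul]
  simp only [Matrix.sub_apply, Matrix.vecMulVec_apply, Matrix.mul_diagonal, Matrix.diagonal_mul,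
    izerginMatrix, Matrix.of_apply]
  linear_combination fC c w (y j) * a j * hkey - hdiag

end IzerginMatrix

section Snoc

variable {n m : ℕ}

lemma izerginWeight_snoc (c : ℂ) (u : Fin n → ℂ) (t : ℂ) (v : Fin m → ℂ) (v0 : ℂ) :
    izerginWeight c (Fin.snoc u t : Fin (n + 1) → ℂ) (Fin.snoc v v0 : Fin (m + 1) → ℂ) =
      Fin.snoc (fun j => fC c t (v j) * fC c (v j) v0 * izerginWeight c u v j)
        (fC c t v0 * ((∏ i, fC c (u i) v0) * ∏ i, fC c v0 (v i))) := by
  ext j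
  refine Fin.lastCases ?_ (fun j => ?_) j
  all_goals
    simp only [izerginWeight, ← Finset.filter_ne', Finset.prod_filter, Fin.prod_univ_castSucc,
      Fin.snoc_castSucc, Fin.snoc_last, ne_eq, Fin.castSucc_inj, Fin.castSucc_ne_last,
      (Fin.castSucc_ne_last _).symm, not_true_eq_false, not_false_eq_true, if_true, if_false]
    ring

lemma izerginMatrix_snoc_zero_one_submatrix {c : ℂ} (hc : c ≠ 0) (ζ a v : Fin m → ℂ) (v0 : ℂ) :
    (izerginMatrix c (Fin.snoc ζ 0 : Fin (m + 1) → ℂ) (Fin.snoc a 1) (Fin.snoc v v0)).submatrix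
        finSumFinEquiv finSumFinEquiv =
      Matrix.fromBlocks (izerginMatrix c ζ a v)
        (Matrix.replicateCol (Fin 1) fun j => a j / hC c (v j) v0)
        (Matrix.replicateRow (Fin 1) fun k => (hC c v0 (v k))⁻¹) 1 := by
  have hinl (j : Fin m) : finSumFinEquiv (Sum.inl j : Fin m ⊕ Fin 1) = j.castSucc := rfl
  have hinr (j : Fin 1) : finSumFinEquiv (Sum.inr j : Fin m ⊕ Fin 1) = Fin.last m := by
    rw [Subsingleton.elim j 0]
    rfl
  ext (j | j) (k | k)
  case inr.inr =>
    simp only [izerginMatrix, Matrix.submatrix_apply, Matrix.of_apply, Matrix.fromBlocks_apply₂₂,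
      hinr, Fin.snoc_last, hC_self hc, Subsingleton.elim j k, Matrix.one_apply_eq, neg_zero,
      zero_mul, zero_add, div_one]
  all_goals
    simp only [izerginMatrix, Matrix.submatrix_apply, Matrix.of_apply, Matrix.fromBlocks_apply₁₁,
      Matrix.fromBlocks_apply₁₂, Matrix.fromBlocks_apply₂₁, Matrix.replicateCol_apply,
      Matrix.replicateRow_apply, hinl, hinr, Fin.snoc_castSucc, Fin.snoc_last, Fin.castSucc_inj,
      Fin.castSucc_ne_last, if_false, mul_zero, neg_zero, zero_mul, zero_add, one_div]

lemma det_izerginMatrix_snoc_zero_one {c : ℂ} (hc : c ≠ 0) (ζ a v : Fin m → ℂ) (v0 : ℂ) :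
    (izerginMatrix c (Fin.snoc ζ 0 : Fin (m + 1) → ℂ) (Fin.snoc a 1) (Fin.snoc v v0)).det =
      (izerginMatrix c ζ a v -
        Matrix.vecMulVec (fun j => a j / hC c (v j) v0) fun k => (hC c v0 (v k))⁻¹).det := by
  rw [← Matrix.det_submatrix_equiv_self finSumFinEquiv, izerginMatrix_snoc_zero_one_submatrix hc,
    Matrix.det_fromBlocks_one₂₂, Matrix.vecMulVec_eq (Fin 1)]
  rfl

lemma det_izerginMatrix_snoc_zero {c : ℂ} (ζ a : Fin m → ℂ) (r : ℂ) {v : Fin m → ℂ} {v0 : ℂ}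
    (hv : ∀ j, v0 ≠ v j)
    (hh : ∀ j k, hC c ((Fin.snoc v v0 : Fin (m + 1) → ℂ) j)
      ((Fin.snoc v v0 : Fin (m + 1) → ℂ) k) ≠ 0) :
    (izerginMatrix c (Fin.snoc ζ 0 : Fin (m + 1) → ℂ)
        (Fin.snoc (fun j => fC c v0 (v j) * fC c (v j) v0 * a j) r) (Fin.snoc v v0)).det =
      r * (izerginMatrix c ζ a v).det := by
  have hc : c ≠ 0 := (div_ne_zero_iff.mp (hh (Fin.last m) (Fin.last m))).2
  have hh0 (j : Fin m) : hC c v0 (v j) ≠ 0 := by simpa using hh (Fin.last m) j.castSucc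
  have hh0' (j : Fin m) : hC c (v j) v0 ≠ 0 := by simpa using hh j.castSucc (Fin.last m)
  have hhv (j k : Fin m) : hC c (v j) (v k) ≠ 0 := by simpa using hh j.castSucc k.castSucc
  have hrow := mul_det_izerginMatrix c r (Fin.snoc ζ 0 : Fin (m + 1) → ℂ)
    (Fin.snoc (fun j => fC c v0 (v j) * fC c (v j) v0 * a j) 1) (Fin.snoc v v0) (Fin.last m)
  simp only [Fin.snoc_last, mul_zero, mul_one, Fin.update_snoc_last] at hrow
  have hconj : (∏ j, fC c v0 (v j)) * ∏ k, (fC c v0 (v k))⁻¹ = 1 := by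
    rw [← Finset.prod_mul_distrib]
    exact Finset.prod_eq_one fun j _ => mul_inv_cancel₀ (fC_ne_zero (hv j) (hh0 j))
  rw [← hrow, det_izerginMatrix_snoc_zero_one hc, izerginMatrix_sub_vecMulVec ζ a hv hh0' hh0 hhv,
    Matrix.det_mul, Matrix.det_mul, Matrix.det_diagonal, Matrix.det_diagonal, mul_right_comm,
    hconj, one_mul]

lemma KIz_snoc (c z : ℂ) (u : Fin n → ℂ) (t : ℂ) (v : Fin m → ℂ) (v0 : ℂ) :
    KIz c z (Fin.snoc u t : Fin (n + 1) → ℂ) (Fin.snoc v v0 : Fin (m + 1) → ℂ) =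
      (izerginMatrix c (Fin.snoc (fun _ => z) z : Fin (m + 1) → ℂ)
        (Fin.snoc (fun j => fC c t (v j) * fC c (v j) v0 * izerginWeight c u v j)
          (fC c t v0 * ((∏ i, fC c (u i) v0) * ∏ i, fC c v0 (v i))))
        (Fin.snoc v v0)).det := by
  have hz : (fun _ => z) = (Fin.snoc (fun _ => z) z : Fin (m + 1) → ℂ) := by
    ext j
    refine Fin.lastCases ?_ (fun j => ?_) j <;> simp
  rw [KIz_eq_det_izerginMatrix, izerginWeight_snoc, hz]

lemma sub_mul_KIz_snoc (c z : ℂ) (u : Fin n → ℂ) {t : ℂ} (v : Fin m → ℂ) {v0 : ℂ}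
    (ht : t ≠ v0) :
    (t - v0) * KIz c z (Fin.snoc u t : Fin (n + 1) → ℂ) (Fin.snoc v v0 : Fin (m + 1) → ℂ) =
      (izerginMatrix c (Fin.snoc (fun _ => z) ((t - v0) * z) : Fin (m + 1) → ℂ)
        (Fin.snoc (fun j => fC c t (v j) * fC c (v j) v0 * izerginWeight c u v j)
          ((t - v0 + c) * ((∏ i, fC c (u i) v0) * ∏ i, fC c v0 (v i))))
        (Fin.snoc v v0)).det := by
  rw [KIz_snoc, mul_det_izerginMatrix c (t - v0) _ _ _ (Fin.last m)]
  simp only [Fin.snoc_last, Fin.update_snoc_last, ← mul_assoc, sub_mul_fC c ht]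

lemma tendsto_sub_mul_KIz_snoc {c : ℂ} (z : ℂ) (u : Fin n → ℂ) {v : Fin m → ℂ} {v0 : ℂ}
    (hv : ∀ j, v0 ≠ v j)
    (hh : ∀ j k, hC c ((Fin.snoc v v0 : Fin (m + 1) → ℂ) j)
      ((Fin.snoc v v0 : Fin (m + 1) → ℂ) k) ≠ 0) :
    Tendsto (fun t => (t - v0) *
        KIz c z (Fin.snoc u t : Fin (n + 1) → ℂ) (Fin.snoc v v0 : Fin (m + 1) → ℂ)) (𝓝[≠] v0)
      (𝓝 (c * (∏ i, fC c (u i) v0) * (∏ i, fC c v0 (v i)) * KIz c z u v)) := by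
  set r := (∏ i, fC c (u i) v0) * ∏ i, fC c v0 (v i) with hr
  let ζ (t : ℂ) : Fin (m + 1) → ℂ := Fin.snoc (fun _ => z) ((t - v0) * z)
  let a (t : ℂ) : Fin (m + 1) → ℂ :=
    Fin.snoc (fun j => fC c t (v j) * fC c (v j) v0 * izerginWeight c u v j) ((t - v0 + c) * r)
  have hζ : ContinuousAt ζ v0 := ContinuousAt.finSnoc (by fun_prop) (by fun_prop)
  have ha : ContinuousAt a v0 := by
    refine ContinuousAt.finSnoc (continuousAt_pi.mpr fun j => ?_) (by fun_prop)
    exact ((continuousAt_fC c (hv j)).mul_const _).mul_const _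
  have hlim : (izerginMatrix c (ζ v0) (a v0) (Fin.snoc v v0)).det =
      c * (∏ i, fC c (u i) v0) * (∏ i, fC c v0 (v i)) * KIz c z u v := by
    simp only [ζ, a, sub_self, zero_mul, zero_add]
    rw [det_izerginMatrix_snoc_zero _ _ _ hv hh, ← KIz_eq_det_izerginMatrix, hr, ← mul_assoc]
  have hdet := (continuous_det_izerginMatrix c (Fin.snoc v v0 : Fin (m + 1) → ℂ)).tendsto
    (ζ v0, a v0)
  rw [← hlim]
  refine ((hdet.comp (hζ.prodMk ha)).mono_left nhdsWithin_le_nhds).congr' ?_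
  filter_upwards [self_mem_nhdsWithin] with t ht
  exact (sub_mul_KIz_snoc c z u v ht).symm

end Snoc

/-- Residue of the modified Izergin determinant at the simple pole `uₙ = vₘ`.
Here `u` is the tuple `ū` with its last entry removed (the last entry is the
variable `t`), `v` is `v̄` with its last entry `v0` removed. -/
theorem stmt15
    (c : ℂ) (hc : c ≠ 0) (z : ℂ) (n m : ℕ)
    (u : Fin n → ℂ) (v : Fin m → ℂ) (v0 : ℂ)
    (hgen : Generic c (Fin.append u (Fin.snoc v v0))) :
    Tendsto (fun t => (t - v0) * KIz c z (Fin.snoc u t) (Fin.snoc v v0))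
        (𝓝[≠] v0)
        (𝓝 (c * (∏ i, fC c (u i) v0) * (∏ i, fC c v0 (v i)) * KIz c z u v)) ∧
      Tendsto (fun t => (t - v0) * KIzBar c z (Fin.snoc u t) (Fin.snoc v v0))
        (𝓝[≠] v0)
        (𝓝 (-c * (∏ i, fC c v0 (u i)) * (∏ i, fC c (v i) v0) * KIzBar c z u v)) := by
  have hv : Generic c (Fin.snoc v v0 : Fin (m + 1) → ℂ) := by
    simpa only [Function.comp_def, Fin.append_right] using
      hgen.comp (Fin.natAdd_injective (m + 1) n)
  have hne (j : Fin m) : v0 ≠ v j := by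
    simpa using hv.injective.ne (Fin.castSucc_ne_last j).symm
  refine ⟨tendsto_sub_mul_KIz_snoc z u hne (hv.hC_ne_zero hc), ?_⟩
  simpa only [KIzBar, fC_neg] using
    tendsto_sub_mul_KIz_snoc z u hne (hv.neg.hC_ne_zero (neg_ne_zero.mpr hc))
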